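/- Let Λ > 0, γ = √(Λ/3), Z(t) = e^{γt}, t₀ > 0. Suppose f(t,p) ≥ 0 is given on [t₀,T]×ℝ³ with sup_{t₀≤s≤T} ‖f(s)‖_{L^∞_m} ≤ c₂ for some c₂ > 0 and m > 5. Let g₀^{ab} and k₀^{ab} be symmetric matrices with (1/A)|p|² ≤ e^{2γt₀} g₀^{ab}p_a p_b ≤ A|p|², max|k₀^{ab}| ≤ A e^{−2γt₀}, H₀ > γ and F₀ < 1/4, and define the iteration (g_n^{ab}, k_n^{ab}) by g_0^{ab}(t) = g₀^{ab}, k_0^{ab}(t) = k₀^{ab}, d g_{n+1}^{ab}/dt = −2k_n^{ab}, d k_{n+1}^{ab}/dt = −2 k_n{}^a{}_c k_n^{bc} − k_n k_n^{ab} + S_n^{ab} + (1/2)(ρ_n − S_n) g_n^{ab} + Λ g_n^{ab}, with the matter terms S_n^{ab}, ρ_n, S_n the weighted moments of f computed with the metric g_n^{ab}. Then for every C₁ > 1 there exist T₂ ∈ (t₀,T] and η ∈ [0,1) such that for all n and all t ∈ [t₀,T₂]: (1/(C₁A))|p|² ≤ Z² g_n^{ab}p_a p_b ≤ C₁A|p|²,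 max|k_n^{ab}| ≤ C₁A Z^{−2}, H_n ≥ γ, and F_n ≤ η²/4. -/

import Mathlib

open Matrix Real MeasureTheory Set

noncomputable section

/-- 3×3 real matrices. -/
abbrev Mat3 := Matrix (Fin 3) (Fin 3) ℝ
/-- Momentum vectors in ℝ³. -/
abbrev V3 := Fin 3 → ℝ

/-- The quadratic form `g^{ab} p_a p_b = pᵀ G p`. -/
def quadG (G : Mat3) (p : V3) : ℝ := p ⬝ᵥ G *ᵥ p

/-- The quadratic form `k^{ab} p_a p_b`. -/
def quadK (K : Mat3) (p : V3) : ℝ := p ⬝ᵥ K *ᵥ p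

/-- Squared Euclidean norm `|p|²`. -/
def enorm2 (p : V3) : ℝ := ∑ i, p i ^ 2

/-- The Japanese bracket `⟨p⟩ = √(1+|p|²)`. -/
def jap (p : V3) : ℝ := Real.sqrt (1 + enorm2 p)

/-- The particle energy `p⁰ = √(1 + g^{ab} p_a p_b)`. -/
def p0 (G : Mat3) (p : V3) : ℝ := Real.sqrt (1 + quadG G p)

/-- The relative momentum `h = √(−(p⁰−q⁰)² + g^{ab}(p_a−q_a)(p_b−q_b))`. -/
def hrel (G : Mat3) (p q : V3) : ℝ :=
  Real.sqrt (-(p0 G p - p0 G q) ^ 2 + quadG G (p - q))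

/-- `s = (p⁰+q⁰)² − g^{ab}(p_a+q_a)(p_b+q_b)`. -/
def sCM (G : Mat3) (p q : V3) : ℝ :=
  (p0 G p + p0 G q) ^ 2 - quadG G (p + q)

/-- `Z(t) = e^{γt}`. -/
def Zfun (γ t : ℝ) : ℝ := Real.exp (γ * t)

/-- `Z_η(t) = e^{(1−η)γt}`. -/
def Zeta (γ η t : ℝ) : ℝ := Real.exp ((1 - η) * γ * t)

/-- The inverse weight `w(q)⁻¹ = exp(−Z_η(q⁰−1))`. -/
def winv (G : Mat3) (Zη : ℝ) (q : V3) : ℝ := Real.exp (-(Zη * (p0 G q - 1)))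

/-- The explicit lower-triangular orthonormal frame `(eⁱ_a)` of the metric `G = (g^{ab})`,
satisfying `eⁱ_a eʲ_b g^{ab} = δⁱʲ`. -/
def frameE (G : Mat3) : Mat3 :=
  !![1 / Real.sqrt (G 0 0), 0, 0;
     -(G 0 1) / Real.sqrt (G 0 0 * (G 0 0 * G 1 1 - G 0 1 ^ 2)),
     G 0 0 / Real.sqrt (G 0 0 * (G 0 0 * G 1 1 - G 0 1 ^ 2)), 0;
     (G 0 1 * G 1 2 - G 0 2 * G 1 1) / Real.sqrt ((G 0 0 * G 1 1 - G 0 1 ^ 2) * G.det),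
     (-(G 0 0) * G 1 2 + G 0 1 * G 0 2) / Real.sqrt ((G 0 0 * G 1 1 - G 0 1 ^ 2) * G.det),
     (G 0 0 * G 1 1 - G 0 1 ^ 2) / Real.sqrt ((G 0 0 * G 1 1 - G 0 1 ^ 2) * G.det)]

/-- `ω_i eⁱ_a`, i.e. the vector `(e⁻¹)ᵀ ω`. -/
def eoV (G : Mat3) (ω : V3) : V3 := (frameE G)ᵀ *ᵥ ω

/-- The coefficient in the relativistic parametrization of post-collision momenta:
`a = −q⁰(n^a ω_i eⁱ_a)/√s + q^a ω_i eⁱ_a + (n^a ω_i eⁱ_a)(n_b q^b)/(√s(n⁰+√s))`,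
where `n = p + q` and `n⁰ = p⁰ + q⁰`. -/
def aCoef (G : Mat3) (p q ω : V3) : ℝ :=
  -(p0 G q) * ((G *ᵥ (p + q)) ⬝ᵥ eoV G ω) / Real.sqrt (sCM G p q)
    + (G *ᵥ q) ⬝ᵥ eoV G ω
    + ((G *ᵥ (p + q)) ⬝ᵥ eoV G ω) * ((p + q) ⬝ᵥ G *ᵥ q)
      / (Real.sqrt (sCM G p q) * (p0 G p + p0 G q + Real.sqrt (sCM G p q)))

/-- The direction vector `ω_j eʲ_d + (n^c ω_j eʲ_c) n_d/(√s(n⁰+√s))`. -/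
def dirVec (G : Mat3) (p q ω : V3) : V3 := fun d =>
  eoV G ω d + ((G *ᵥ (p + q)) ⬝ᵥ eoV G ω) * (p + q) d
    / (Real.sqrt (sCM G p q) * (p0 G p + p0 G q + Real.sqrt (sCM G p q)))

/-- The post-collision momentum `p'`. -/
def pPost (G : Mat3) (p q ω : V3) : V3 :=
  fun d => p d + 2 * aCoef G p q ω * dirVec G p q ω d

/-- The post-collision momentum `q'`. -/
def qPost (G : Mat3) (p q ω : V3) : V3 :=
  fun d => q d - 2 * aCoef G p q ω * dirVec G p q ω d

/-- The unit sphere `𝕊² ⊂ ℝ³`. -/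
abbrev Sph := Metric.sphere (0 : EuclideanSpace ℝ (Fin 3)) 1

/-- The surface measure on the unit sphere. -/
def sphMeasure : Measure Sph := (volume : Measure (EuclideanSpace ℝ (Fin 3))).toSphere

/-- A point of the sphere, viewed as a vector of `ℝ³`. -/
def sphV (ω : Sph) : V3 := fun i => (ω : EuclideanSpace ℝ (Fin 3)) i

/-- The collision kernel `h^{1−b} √s/(p⁰ q⁰)` for the soft potential `σ(h,ω) = h^{−b}`. -/
def collKer (G : Mat3) (b : ℝ) (p q : V3) : ℝ :=
  hrel G p q ^ (1 - b) * Real.sqrt (sCM G p q) / (p0 G p * p0 G q)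

/-- The collision operator `Γ(f,f)` of the weighted Boltzmann equation. -/
def GammaOp (G : Mat3) (Zη b : ℝ) (f : V3 → ℝ) (p : V3) : ℝ :=
  Real.sqrt G.det * ∫ q : V3,
    (∫ ω : Sph, collKer G b p q *
        (f (pPost G p q (sphV ω)) * f (qPost G p q (sphV ω)) - f p * f q) ∂sphMeasure)
      * winv G Zη q

/-- The mixed collision operator used in the iteration for the Boltzmann equation, where
the loss term contains the value `fval` of the next iterate at `p`. -/
def GammaIter (G : Mat3) (Zη b : ℝ) (fn : V3 → ℝ) (fval : ℝ) (p : V3) : ℝ :=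
  Real.sqrt G.det * ∫ q : V3,
    (∫ ω : Sph, collKer G b p q *
        (fn (pPost G p q (sphV ω)) * fn (qPost G p q (sphV ω)) - fval * fn q) ∂sphMeasure)
      * winv G Zη q

/-- The energy density `ρ = (det g)^{−1/2} ∫ f p⁰ w⁻¹ dp`. -/
def rhoT (G : Mat3) (Zη : ℝ) (f : V3 → ℝ) : ℝ :=
  Real.sqrt G.det * ∫ p : V3, f p * p0 G p * winv G Zη p

/-- The stress `S^{ab} = (det g)^{−1/2} ∫ f p^a p^b/p⁰ w⁻¹ dp`. -/
def SupT (G : Mat3) (Zη : ℝ) (f : V3 → ℝ) : Mat3 :=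
  Matrix.of fun a b =>
    Real.sqrt G.det * ∫ p : V3, f p * ((G *ᵥ p) a * (G *ᵥ p) b / p0 G p) * winv G Zη p

/-- The trace `S = g_{ab}S^{ab} = (det g)^{−1/2} ∫ f g^{ab}p_ap_b/p⁰ w⁻¹ dp`. -/
def StrT (G : Mat3) (Zη : ℝ) (f : V3 → ℝ) : ℝ :=
  Real.sqrt G.det * ∫ p : V3, f p * (quadG G p / p0 G p) * winv G Zη p

/-- The trace `k = g_{ab} k^{ab}`. -/
def trK (G K : Mat3) : ℝ := ∑ a, ∑ b, G⁻¹ a b * K a b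

/-- The Hubble scalar `H = (1/3) g_{ab} k^{ab}`. -/
def Hub (G K : Mat3) : ℝ := (1 / 3) * trK G K

/-- The shear `σ^{ab} = k^{ab} − H g^{ab}`. -/
def shearUp (G K : Mat3) : Mat3 := K - Hub G K • G

/-- `σ_{ab} σ^{ab}` with `σ_{ab} = g_{ac}g_{bd}σ^{cd}`. -/
def shearSq (G K : Mat3) : ℝ :=
  ∑ a, ∑ b, (G⁻¹ * shearUp G K * G⁻¹) a b * shearUp G K a b

/-- The shear variable `F = σ_{ab}σ^{ab}/(4H²)`. -/
def Fvar (G K : Mat3) : ℝ := shearSq G K / (4 * Hub G K ^ 2)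

/-- `λ_η(p) = −((1−η)γ(p⁰−1) − k^{ab}p_a p_b/p⁰) Z_η`. -/
def lamEta (G K : Mat3) (γ η Zη : ℝ) (p : V3) : ℝ :=
  -((1 - η) * γ * (p0 G p - 1) - quadK K p / p0 G p) * Zη

/-- The right hand side of the evolution equation for `k^{ab}`:
`−2k^a_c k^{bc} − k k^{ab} + S^{ab} + (1/2)(ρ−S)g^{ab} + Λ g^{ab}`. -/
def kEvol (Λ Zη : ℝ) (G K : Mat3) (f : V3 → ℝ) : Mat3 :=
  (-2 : ℝ) • (K * G⁻¹ * K) - trK G K • K + SupT G Zη f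
    + ((1 / 2) * (rhoT G Zη f - StrT G Zη f)) • G + Λ • G

/-- The Hamiltonian constraint `−k_{ab}k^{ab} + k² = 2ρ + 2Λ`. -/
def ConstraintEq (Λ ρ : ℝ) (G K : Mat3) : Prop :=
  -(∑ a, ∑ b, (G⁻¹ * K * G⁻¹) a b * K a b) + trK G K ^ 2 = 2 * ρ + 2 * Λ

open Filter Topology Metric

/-!
Let `x₀ = (g₀, k₀)`. The right hand side of the iteration is bounded by one constant `L` on a whole
neighbourhood of `(t₀, x₀)`, uniformly over all distributions obeying the weighted `L^∞` bound.
Since `x_{n+1}` starts at `x₀` and its derivative is the right hand side evaluated at `x_n`, the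
iterates therefore inductively stay within `L (t - t₀)` of `x₀`, so they never leave a prescribed
neighbourhood of `(t₀, x₀)` up to a time that does not depend on `n`. The asserted bounds hold
strictly at `(t₀, x₀)`, once `η < 1` is chosen with `F₀ < η² / 4`, and they are stable under small
perturbations, so they define such a neighbourhood.
-/

section Picard

variable {E : Type*} [NormedAddCommGroup E] [NormedSpace ℝ E]

/-- The successive approximations `x (n + 1)' = v t (x n)`, `x (n + 1) t₀ = x₀` of an initial value
problem on `[t₀, T]`, started from the constant curve `x₀`. -/
structure IsPicardIteration (v : ℝ → E → E) (t₀ T : ℝ) (x₀ : E) (x : ℕ → ℝ → E) : Prop where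
  zero : ∀ t, x 0 t = x₀
  initial : ∀ n, x (n + 1) t₀ = x₀
  deriv : ∀ n, ∀ t ∈ Icc t₀ T,
    HasDerivWithinAt (x (n + 1)) (v t (x n t)) (Icc t₀ T) t

variable {v : ℝ → E → E} {t₀ t₁ T L r : ℝ} {x₀ : E} {x : ℕ → ℝ → E}

lemma IsPicardIteration.mono (hx : IsPicardIteration v t₀ T x₀ x) (h : t₁ ≤ T) :
    IsPicardIteration v t₀ t₁ x₀ x where
  zero := hx.zero
  initial := hx.initial
  deriv n t ht := (hx.deriv n t ⟨ht.1, ht.2.trans h⟩).mono (Icc_subset_Icc_right h)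

lemma IsPicardIteration.mem_closedBall (hx : IsPicardIteration v t₀ T x₀ x) (hr : 0 ≤ r)
    (hv : ∀ t ∈ Icc t₀ T, ∀ y ∈ closedBall x₀ r, ‖v t y‖ ≤ L) (hL : L * (T - t₀) ≤ r) (n : ℕ) :
    ∀ t ∈ Icc t₀ T, x n t ∈ closedBall x₀ r := by
  induction n with
  | zero => exact fun t _ => by simpa only [hx.zero] using mem_closedBall_self hr
  | succ n ih =>
    intro t ht
    have hspeed : ∀ s ∈ Icc t₀ T, ‖v s (x n s)‖ ≤ L := fun s hs => hv s hs _ (ih s hs)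
    have hL₀ : 0 ≤ L := (norm_nonneg _).trans (hspeed t ht)
    rw [mem_closedBall_iff_norm, ← hx.initial n]
    calc ‖x (n + 1) t - x (n + 1) t₀‖ ≤ L * ‖t - t₀‖ :=
          (convex_Icc t₀ T).norm_image_sub_le_of_norm_hasDerivWithin_le (hx.deriv n) hspeed
            (left_mem_Icc.2 (ht.1.trans ht.2)) ht
      _ = L * (t - t₀) := by rw [Real.norm_of_nonneg (sub_nonneg.2 ht.1)]
      _ ≤ L * (T - t₀) := by gcongr; exact ht.2
      _ ≤ r := hL

lemma exists_forall_isPicardIteration_mem {U : Set (ℝ × E)} (hT : t₀ < T) (hU : U ∈ 𝓝 (t₀, x₀))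
    (hv : ∀ t ∈ Icc t₀ T, ∀ y, (t, y) ∈ U → ‖v t y‖ ≤ L) :
    ∃ t₁, t₀ < t₁ ∧ t₁ ≤ T ∧ ∀ x, IsPicardIteration v t₀ T x₀ x →
      ∀ n, ∀ t ∈ Icc t₀ t₁, (t, x n t) ∈ U := by
  obtain ⟨r, hr, hrU⟩ := nhds_basis_closedBall.mem_iff.1 hU
  have hshort : ∀ᶠ t₁ in 𝓝 t₀, t₁ - t₀ < r ∧ L * (t₁ - t₀) < r ∧ t₁ < T :=
    (((continuous_sub_right t₀).tendsto' t₀ 0 (sub_self t₀)).eventually_lt_const hr).and <|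
      ((Continuous.tendsto' (by fun_prop) t₀ 0 (by simp)).eventually_lt_const hr).and <|
        eventually_lt_nhds hT
  obtain ⟨t₁, ⟨htime, hLr, ht₁⟩, ht₀⟩ :=
    ((hshort.filter_mono nhdsWithin_le_nhds).and (self_mem_nhdsWithin (s := Ioi t₀))).exists
  have hbox : ∀ t ∈ Icc t₀ t₁, ∀ y ∈ closedBall x₀ r, (t, y) ∈ U := by
    intro t ht y hy
    have htr : t ∈ closedBall t₀ r := by
      rw [mem_closedBall, Real.dist_eq, abs_of_nonneg (sub_nonneg.2 ht.1)]
      linarith [ht.2]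
    exact hrU (closedBall_prod_same t₀ x₀ r ▸ mk_mem_prod htr hy)
  refine ⟨t₁, ht₀, ht₁.le, fun x hx n t ht => hbox t ht _ ?_⟩
  exact (hx.mono ht₁.le).mem_closedBall hr.le
    (fun s hs y hy => hv s ⟨hs.1, hs.2.trans ht₁.le⟩ y (hbox s hs y hy)) hLr.le n t ht

end Picard

section Continuity

variable {X m n R : Type*} [TopologicalSpace X] {x : X}

lemma continuousAt_matrix_inv_comp [Fintype n] [DecidableEq n] [Field R] [TopologicalSpace R]
    [IsTopologicalRing R] [ContinuousInv₀ R] {A : X → Matrix n n R} (hA : ContinuousAt A x)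
    (hdet : (A x).det ≠ 0) : ContinuousAt (fun y => (A y)⁻¹) x := by
  refine (continuousAt_matrix_inv (A x) ?_).comp hA
  rw [Ring.inverse_eq_inv']
  exact continuousAt_inv₀ hdet

lemma continuousAt_sum_sum_mul [Fintype m] [Fintype n] [NonUnitalNonAssocSemiring R]
    [TopologicalSpace R] [IsTopologicalSemiring R] {A B : X → Matrix m n R}
    (hA : ContinuousAt A x) (hB : ContinuousAt B x) :
    ContinuousAt (fun y => ∑ i, ∑ j, A y i j * B y i j) x :=
  tendsto_finsetSum _ fun i _ => tendsto_finsetSum _ fun j _ =>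
    have hentry : Continuous fun M : Matrix m n R => M i j := by fun_prop
    (hentry.continuousAt.comp hA).mul (hentry.continuousAt.comp hB)

variable {G K : X → Mat3} (hG : ContinuousAt G x) (hK : ContinuousAt K x)
  (hdet : (G x).det ≠ 0)
include hG hK hdet

lemma continuousAt_trK : ContinuousAt (fun y => trK (G y) (K y)) x :=
  continuousAt_sum_sum_mul (continuousAt_matrix_inv_comp hG hdet) hK

lemma continuousAt_Hub : ContinuousAt (fun y => Hub (G y) (K y)) x :=
  (continuousAt_trK hG hK hdet).const_mul _

lemma continuousAt_shearSq : ContinuousAt (fun y => shearSq (G y) (K y)) x := by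
  have hinv := continuousAt_matrix_inv_comp hG hdet
  have hshear : ContinuousAt (fun y => shearUp (G y) (K y)) x :=
    hK.sub ((continuousAt_Hub hG hK hdet).smul hG)
  exact continuousAt_sum_sum_mul (by fun_prop) hshear

lemma continuousAt_Fvar (hH : Hub (G x) (K x) ≠ 0) :
    ContinuousAt (fun y => Fvar (G y) (K y)) x :=
  (continuousAt_shearSq hG hK hdet).div (((continuousAt_Hub hG hK hdet).pow 2).const_mul 4)
    (mul_ne_zero four_ne_zero (pow_ne_zero 2 hH))

end Continuity

attribute [local instance] Matrix.normedAddCommGroup Matrix.normedSpace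

section SupNorm

variable {m n : Type*} [Fintype m] [Fintype n]

lemma abs_dotProduct_le (u v : n → ℝ) : |u ⬝ᵥ v| ≤ Fintype.card n * (‖u‖ * ‖v‖) := by
  calc |u ⬝ᵥ v| ≤ ∑ i, |u i * v i| := Finset.abs_sum_le_sum_abs _ _
    _ ≤ ∑ _i : n, ‖u‖ * ‖v‖ := Finset.sum_le_sum fun i _ => by
        rw [abs_mul]
        exact mul_le_mul (norm_le_pi_norm u i) (norm_le_pi_norm v i) (abs_nonneg _) (norm_nonneg _)
    _ = Fintype.card n * (‖u‖ * ‖v‖) := by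
        rw [Finset.sum_const, Finset.card_univ, nsmul_eq_mul]

lemma norm_mulVec_le (A : Matrix m n ℝ) (v : n → ℝ) :
    ‖A *ᵥ v‖ ≤ Fintype.card n * (‖A‖ * ‖v‖) := by
  refine (pi_norm_le_iff_of_nonneg (by positivity)).2 fun i => (abs_dotProduct_le (A i) v).trans ?_
  gcongr
  exact norm_le_pi_norm A i

end SupNorm

section QuadraticForm

variable {G g₀ : Mat3} {α β : ℝ}

lemma enorm2_nonneg (p : V3) : 0 ≤ enorm2 p :=
  Finset.sum_nonneg fun _ _ => sq_nonneg _

lemma enorm2_eq_zero {p : V3} : enorm2 p = 0 ↔ p = 0 := by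
  simp [enorm2, Finset.sum_eq_zero_iff_of_nonneg, sq_nonneg, funext_iff]

lemma norm_sq_le_enorm2 (p : V3) : ‖p‖ ^ 2 ≤ enorm2 p := by
  rw [← Real.le_sqrt (norm_nonneg p) (enorm2_nonneg p)]
  refine (pi_norm_le_iff_of_nonneg (Real.sqrt_nonneg _)).2 fun i => Real.abs_le_sqrt ?_
  exact Finset.single_le_sum (f := fun i => p i ^ 2) (fun i _ => sq_nonneg _) (Finset.mem_univ i)

lemma quadG_sub (G G' : Mat3) (p : V3) : quadG (G - G') p = quadG G p - quadG G' p := by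
  simp only [quadG, sub_mulVec, dotProduct_sub]

lemma quadG_smul (c : ℝ) (G : Mat3) (p : V3) : quadG (c • G) p = c * quadG G p := by
  simp only [quadG, smul_mulVec, dotProduct_smul, smul_eq_mul]

lemma abs_mulVec_apply_le (G : Mat3) (p : V3) (a : Fin 3) : |(G *ᵥ p) a| ≤ 3 * (‖G‖ * ‖p‖) := by
  simpa using (norm_le_pi_norm (G *ᵥ p) a).trans (norm_mulVec_le G p)

lemma abs_quadG_le (G : Mat3) (p : V3) : |quadG G p| ≤ 9 * ‖G‖ * ‖p‖ ^ 2 := by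
  calc |quadG G p| ≤ 3 * (‖p‖ * ‖G *ᵥ p‖) := by simpa [quadG] using abs_dotProduct_le p (G *ᵥ p)
    _ ≤ 3 * (‖p‖ * (3 * (‖G‖ * ‖p‖))) := by gcongr; simpa using norm_mulVec_le G p
    _ = 9 * ‖G‖ * ‖p‖ ^ 2 := by ring

lemma det_ne_zero_of_le_quadG (hα : 0 < α) (hG : ∀ p, α * enorm2 p ≤ quadG G p) :
    G.det ≠ 0 := by
  intro hdet
  obtain ⟨p, hp, hGp⟩ := exists_mulVec_eq_zero_iff.2 hdet
  have hle : α * enorm2 p ≤ 0 := by simpa only [quadG, hGp, dotProduct_zero] using hG p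
  exact hp (enorm2_eq_zero.1
    ((nonpos_of_mul_nonpos_right hle hα).antisymm (enorm2_nonneg p)))

lemma eventually_abs_quadG_sub_le {δ : ℝ} (hδ : 0 < δ) (g₀ : Mat3) :
    ∀ᶠ G in 𝓝 g₀, ∀ p, |quadG G p - quadG g₀ p| ≤ δ * enorm2 p := by
  have hcont : Continuous fun G : Mat3 => 9 * ‖G - g₀‖ := by fun_prop
  filter_upwards [(hcont.tendsto' g₀ 0 (by simp)).eventually_lt_const hδ] with G hG p
  rw [← quadG_sub]
  calc |quadG (G - g₀) p| ≤ 9 * ‖G - g₀‖ * ‖p‖ ^ 2 := abs_quadG_le _ _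
    _ ≤ δ * enorm2 p := by gcongr; exact norm_sq_le_enorm2 p

lemma eventually_mul_enorm2_le_quadG (hg₀ : ∀ p, α * enorm2 p ≤ quadG g₀ p) (h : β < α) :
    ∀ᶠ G in 𝓝 g₀, ∀ p, β * enorm2 p ≤ quadG G p := by
  filter_upwards [eventually_abs_quadG_sub_le (sub_pos.2 h) g₀] with G hG p
  linarith [(abs_le.1 (hG p)).1, hg₀ p]

lemma eventually_quadG_le_mul_enorm2 (hg₀ : ∀ p, quadG g₀ p ≤ α * enorm2 p) (h : α < β) :
    ∀ᶠ G in 𝓝 g₀, ∀ p, quadG G p ≤ β * enorm2 p := by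
  filter_upwards [eventually_abs_quadG_sub_le (sub_pos.2 h) g₀] with G hG p
  linarith [(abs_le.1 (hG p)).2, hg₀ p]

end QuadraticForm

section Moments

variable {G : Mat3} {Zη c m : ℝ} {f φ : V3 → ℝ} {p : V3}

lemma one_le_p0 (hG : 0 ≤ quadG G p) : 1 ≤ p0 G p :=
  Real.one_le_sqrt.2 (le_add_of_nonneg_right hG)

lemma winv_le_one (hG : 0 ≤ quadG G p) (hZ : 0 ≤ Zη) : winv G Zη p ≤ 1 :=
  Real.exp_le_one_iff.2 (neg_nonpos.2 (mul_nonneg hZ (sub_nonneg.2 (one_le_p0 hG))))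

lemma abs_le_of_jap_rpow_mul_abs_le {y : ℝ} (hm : 0 ≤ m) (h : jap p ^ m * |y| ≤ c) :
    |y| ≤ c * (1 + ‖p‖ ^ 2) ^ (-m / 2) := by
  have hE : 0 < 1 + enorm2 p := by linarith [enorm2_nonneg p]
  have hjap : jap p ^ m = (1 + enorm2 p) ^ (m / 2) := by
    rw [jap, Real.sqrt_eq_rpow, ← Real.rpow_mul hE.le]
    ring_nf
  have hc : 0 ≤ c := le_trans (mul_nonneg (hjap ▸ by positivity) (abs_nonneg y)) h
  calc |y| = jap p ^ m * |y| * (1 + enorm2 p) ^ (-m / 2) := by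
        rw [hjap, mul_right_comm, ← Real.rpow_add hE, neg_div, add_neg_cancel, Real.rpow_zero,
          one_mul]
    _ ≤ c * (1 + enorm2 p) ^ (-m / 2) := by gcongr
    _ ≤ c * (1 + ‖p‖ ^ 2) ^ (-m / 2) := by
        gcongr c * ?_
        exact Real.rpow_le_rpow_of_nonpos (by positivity)
          (by linarith [norm_sq_le_enorm2 p]) (by linarith)

/-- The finite constant `∫ ⟨p⟩^{2-m} dp`, `m > 5`, which controls the matter moments of a
distribution with `‖f‖_{L^∞_m} ≤ 1`. The bracket is taken with the sup norm of `p`, which only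
makes it smaller. -/
def momentConst (m : ℝ) : ℝ := ∫ p : V3, (1 + ‖p‖ ^ 2) ^ (-(m - 2) / 2)

lemma abs_moment_le {C : ℝ} (hm : 5 < m) (hZ : 0 ≤ Zη) (hG : ∀ p, 0 ≤ quadG G p)
    (hf : ∀ p, jap p ^ m * |f p| ≤ c) (hφ : ∀ p, |φ p| ≤ C * (1 + ‖p‖ ^ 2)) :
    |√G.det * ∫ p, f p * φ p * winv G Zη p| ≤ √G.det * (C * (c * momentConst m)) := by
  have hint : Integrable fun p : V3 => (1 + ‖p‖ ^ 2) ^ (-(m - 2) / 2) :=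
    integrable_rpow_neg_one_add_norm_sq (by simp; linarith)
  rw [abs_mul, abs_of_nonneg (Real.sqrt_nonneg _), momentConst, ← integral_const_mul,
    ← integral_const_mul]
  gcongr
  rw [← Real.norm_eq_abs]
  refine norm_integral_le_of_norm_le ((hint.const_mul c).const_mul C)
    (Eventually.of_forall fun p => ?_)
  have hf' := abs_le_of_jap_rpow_mul_abs_le (by linarith) (hf p)
  have hw : |winv G Zη p| ≤ 1 := (abs_of_pos (Real.exp_pos _)).trans_le (winv_le_one (hG p) hZ)
  have hpow : (1 + ‖p‖ ^ 2) ^ (-(m - 2) / 2) = (1 + ‖p‖ ^ 2) * (1 + ‖p‖ ^ 2) ^ (-m / 2) := by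
    rw [← Real.rpow_one_add' (by positivity) (by linarith)]
    ring_nf
  calc ‖f p * φ p * winv G Zη p‖ = |f p| * |φ p| * |winv G Zη p| := by
        rw [Real.norm_eq_abs, abs_mul, abs_mul]
    _ ≤ |f p| * |φ p| := mul_le_of_le_one_right (by positivity) hw
    _ ≤ c * (1 + ‖p‖ ^ 2) ^ (-m / 2) * (C * (1 + ‖p‖ ^ 2)) :=
        mul_le_mul hf' (hφ p) (abs_nonneg _) ((abs_nonneg _).trans hf')
    _ = C * (c * (1 + ‖p‖ ^ 2) ^ (-(m - 2) / 2)) := by rw [hpow]; ring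

lemma abs_div_p0_le {y : ℝ} (hG : 0 ≤ quadG G p) : |y / p0 G p| ≤ |y| := by
  have hp0 := one_le_p0 hG
  rw [abs_div, abs_of_pos (one_pos.trans_le hp0)]
  exact div_le_self (abs_nonneg y) hp0

variable (hm : 5 < m) (hZ : 0 ≤ Zη) (hG : ∀ p, 0 ≤ quadG G p)
  (hf : ∀ p, jap p ^ m * |f p| ≤ c)
include hm hZ hG hf

lemma norm_SupT_le : ‖SupT G Zη f‖ ≤ √G.det * (9 * ‖G‖ ^ 2 * (c * momentConst m)) := by
  have hentry : ∀ a b, |SupT G Zη f a b| ≤ √G.det * (9 * ‖G‖ ^ 2 * (c * momentConst m)) :=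
    fun a b => abs_moment_le hm hZ hG hf fun p => by
      calc |(G *ᵥ p) a * (G *ᵥ p) b / p0 G p| ≤ |(G *ᵥ p) a| * |(G *ᵥ p) b| :=
            (abs_div_p0_le (hG p)).trans_eq (abs_mul _ _)
        _ ≤ 3 * (‖G‖ * ‖p‖) * (3 * (‖G‖ * ‖p‖)) := by
            gcongr <;> exact abs_mulVec_apply_le G p _
        _ = 9 * ‖G‖ ^ 2 * ‖p‖ ^ 2 := by ring
        _ ≤ 9 * ‖G‖ ^ 2 * (1 + ‖p‖ ^ 2) := by gcongr; linarith
  exact (Matrix.norm_le_iff ((abs_nonneg _).trans (hentry 0 0))).2 hentry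

lemma abs_StrT_le : |StrT G Zη f| ≤ √G.det * (9 * ‖G‖ * (c * momentConst m)) :=
  abs_moment_le hm hZ hG hf fun p => by
    calc |quadG G p / p0 G p| ≤ 9 * ‖G‖ * ‖p‖ ^ 2 :=
          (abs_div_p0_le (hG p)).trans (abs_quadG_le G p)
      _ ≤ 9 * ‖G‖ * (1 + ‖p‖ ^ 2) := by gcongr; linarith

lemma abs_rhoT_le : |rhoT G Zη f| ≤ √G.det * ((1 + 9 * ‖G‖) * (c * momentConst m)) :=
  abs_moment_le hm hZ hG hf fun p => by
    have hle : 1 ≤ 1 + quadG G p := le_add_of_nonneg_right (hG p)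
    calc |p0 G p| ≤ 1 + quadG G p := by
          rw [p0, abs_of_nonneg (Real.sqrt_nonneg _), Real.sqrt_le_left (by linarith)]
          exact le_self_pow₀ hle two_ne_zero
      _ ≤ 1 + 9 * ‖G‖ * ‖p‖ ^ 2 := by gcongr; exact (le_abs_self _).trans (abs_quadG_le G p)
      _ ≤ (1 + 9 * ‖G‖) * (1 + ‖p‖ ^ 2) := by nlinarith [norm_nonneg G, sq_nonneg ‖p‖]

end Moments

section Evolution

variable {G K g₀ k₀ : Mat3} {Λ γ η t₀ T c m α Zη : ℝ}

/-- The part `-2 k^a_c k^{bc} - k k^{ab} + Λ g^{ab}` of the evolution equation for `k^{ab}` which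
does not involve the matter distribution. -/
def vacuumPart (Λ : ℝ) (G K : Mat3) : Mat3 :=
  (-2 : ℝ) • (K * G⁻¹ * K) - trK G K • K + Λ • G

/-- The matter source `S^{ab} + (1/2)(ρ - S) g^{ab}` of the evolution equation for `k^{ab}`. -/
def matterPart (G : Mat3) (Zη : ℝ) (f : V3 → ℝ) : Mat3 :=
  SupT G Zη f + ((1 / 2) * (rhoT G Zη f - StrT G Zη f)) • G

lemma kEvol_eq_vacuumPart_add_matterPart (f : V3 → ℝ) :
    kEvol Λ Zη G K f = vacuumPart Λ G K + matterPart G Zη f := by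
  rw [kEvol, vacuumPart, matterPart]
  abel

lemma continuousAt_vacuumPart (hdet : g₀.det ≠ 0) :
    ContinuousAt (fun x : Mat3 × Mat3 => vacuumPart Λ x.1 x.2) (g₀, k₀) := by
  have hinv : ContinuousAt (fun x : Mat3 × Mat3 => x.1⁻¹) (g₀, k₀) :=
    continuousAt_matrix_inv_comp continuousAt_fst hdet
  have htr : ContinuousAt (fun x : Mat3 × Mat3 => trK x.1 x.2) (g₀, k₀) :=
    continuousAt_trK continuousAt_fst continuousAt_snd hdet
  unfold vacuumPart
  fun_prop

lemma norm_matterPart_le {f : V3 → ℝ} (hm : 5 < m) (hZ : 0 ≤ Zη) (hG : ∀ p, 0 ≤ quadG G p)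
    (hf : ∀ p, jap p ^ m * |f p| ≤ c) :
    ‖matterPart G Zη f‖ ≤ √G.det * ((18 * ‖G‖ ^ 2 + ‖G‖ / 2) * (c * momentConst m)) := by
  have hρS : |rhoT G Zη f - StrT G Zη f| ≤ √G.det * ((1 + 9 * ‖G‖) * (c * momentConst m))
      + √G.det * (9 * ‖G‖ * (c * momentConst m)) :=
    (abs_sub _ _).trans (add_le_add (abs_rhoT_le hm hZ hG hf) (abs_StrT_le hm hZ hG hf))
  calc ‖matterPart G Zη f‖
      ≤ ‖SupT G Zη f‖ + 1 / 2 * |rhoT G Zη f - StrT G Zη f| * ‖G‖ := by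
        refine (norm_add_le _ _).trans_eq ?_
        rw [norm_smul, norm_mul, Real.norm_eq_abs (_ - _), Real.norm_of_nonneg one_half_pos.le]
    _ ≤ √G.det * (9 * ‖G‖ ^ 2 * (c * momentConst m))
        + 1 / 2 * (√G.det * ((1 + 9 * ‖G‖) * (c * momentConst m))
          + √G.det * (9 * ‖G‖ * (c * momentConst m))) * ‖G‖ := by
        gcongr
        exact norm_SupT_le hm hZ hG hf
    _ = √G.det * ((18 * ‖G‖ ^ 2 + ‖G‖ / 2) * (c * momentConst m)) := by ring

lemma exists_eventually_norm_kEvol_le (Λ c : ℝ) (k₀ : Mat3) (hm : 5 < m) (hα : 0 < α)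
    (hg₀ : ∀ p, α * enorm2 p ≤ quadG g₀ p) :
    ∃ L, ∀ᶠ x : Mat3 × Mat3 in 𝓝 (g₀, k₀), ∀ Zη, 0 ≤ Zη → ∀ f : V3 → ℝ,
      (∀ p, jap p ^ m * |f p| ≤ c) → ‖kEvol Λ Zη x.1 x.2 f‖ ≤ L := by
  have hdet := det_ne_zero_of_le_quadG hα hg₀
  have hvac := (continuousAt_vacuumPart (Λ := Λ) (k₀ := k₀) hdet).norm
  have hmat : Continuous fun x : Mat3 × Mat3 =>
      √x.1.det * ((18 * ‖x.1‖ ^ 2 + ‖x.1‖ / 2) * (c * momentConst m)) := by fun_prop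
  have hcoer : ∀ᶠ x : Mat3 × Mat3 in 𝓝 (g₀, k₀), ∀ p, 0 * enorm2 p ≤ quadG x.1 p :=
    continuousAt_fst.eventually (eventually_mul_enorm2_le_quadG hg₀ hα)
  obtain ⟨L, hL⟩ := exists_gt
    (‖vacuumPart Λ g₀ k₀‖ + √g₀.det * ((18 * ‖g₀‖ ^ 2 + ‖g₀‖ / 2) * (c * momentConst m)))
  refine ⟨L, ?_⟩
  filter_upwards [(hvac.add hmat.continuousAt).eventually_lt_const hL, hcoer]
    with x hx hG Zη hZ f hf
  calc ‖kEvol Λ Zη x.1 x.2 f‖ ≤ ‖vacuumPart Λ x.1 x.2‖ + ‖matterPart x.1 Zη f‖ :=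
        kEvol_eq_vacuumPart_add_matterPart f ▸ norm_add_le _ _
    _ ≤ ‖vacuumPart Λ x.1 x.2‖
        + √x.1.det * ((18 * ‖x.1‖ ^ 2 + ‖x.1‖ / 2) * (c * momentConst m)) := by
        gcongr
        exact norm_matterPart_le hm hZ (by simpa using hG) hf
    _ ≤ L := hx.le

/-- The right hand side of the iteration as a time-dependent vector field on pairs
`(g^{ab}, k^{ab})`. -/
def einsteinField (Λ γ η : ℝ) (f : ℝ → V3 → ℝ) (t : ℝ) (x : Mat3 × Mat3) : Mat3 × Mat3 :=
  ((-2 : ℝ) • x.2, kEvol Λ (Zeta γ η t) x.1 x.2 (f t))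

lemma exists_eventually_norm_einsteinField_le (Λ c : ℝ) (k₀ : Mat3) (hm : 5 < m) (hα : 0 < α)
    (hg₀ : ∀ p, α * enorm2 p ≤ quadG g₀ p) :
    ∃ L, ∀ᶠ x in 𝓝 (g₀, k₀), ∀ γ η t, ∀ f : ℝ → V3 → ℝ,
      (∀ p, jap p ^ m * |f t p| ≤ c) → ‖einsteinField Λ γ η f t x‖ ≤ L := by
  obtain ⟨L, hL⟩ := exists_eventually_norm_kEvol_le Λ c k₀ hm hα hg₀
  have hsnd : Continuous fun x : Mat3 × Mat3 => ‖(-2 : ℝ) • x.2‖ := by fun_prop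
  refine ⟨max (‖(-2 : ℝ) • k₀‖ + 1) L, ?_⟩
  filter_upwards [hL, hsnd.continuousAt.eventually_lt_const (lt_add_one _)]
    with x hk hg γ η t f hf
  exact max_le_max hg.le (hk _ (Real.exp_pos _).le (f t) hf)

lemma isPicardIteration_einsteinField {f : ℝ → V3 → ℝ} {gs ks : ℕ → ℝ → Mat3}
    (hzero : ∀ t, gs 0 t = g₀ ∧ ks 0 t = k₀)
    (hinit : ∀ n, gs (n + 1) t₀ = g₀ ∧ ks (n + 1) t₀ = k₀)
    (hgs : ∀ n, ∀ a b : Fin 3, ∀ t ∈ Icc t₀ T,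
      HasDerivWithinAt (fun s => gs (n + 1) s a b) (-2 * ks n t a b) (Icc t₀ T) t)
    (hks : ∀ n, ∀ a b : Fin 3, ∀ t ∈ Icc t₀ T,
      HasDerivWithinAt (fun s => ks (n + 1) s a b)
        (kEvol Λ (Zeta γ η t) (gs n t) (ks n t) (f t) a b) (Icc t₀ T) t) :
    IsPicardIteration (einsteinField Λ γ η f) t₀ T (g₀, k₀) fun n t => (gs n t, ks n t) where
  zero t := Prod.ext (hzero t).1 (hzero t).2
  initial n := Prod.ext (hinit n).1 (hinit n).2
  deriv n t ht :=
    (hasDerivWithinAt_pi.2 fun a => hasDerivWithinAt_pi.2 fun b => hgs n a b t ht).prodMk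
      (hasDerivWithinAt_pi.2 fun a => hasDerivWithinAt_pi.2 fun b => hks n a b t ht)

end Evolution

section Bounds

variable {g₀ k₀ : Mat3} {γ η t₀ A B : ℝ}

/-- The bounds propagated by the iteration, with `B` standing for the constant `C₁ A`. -/
def IterationBounds (γ B η t : ℝ) (G K : Mat3) : Prop :=
  (∀ p : V3, (1 / B) * enorm2 p ≤ Zfun γ t ^ 2 * quadG G p ∧
    Zfun γ t ^ 2 * quadG G p ≤ B * enorm2 p) ∧
  (∀ a b : Fin 3, |K a b| ≤ B / Zfun γ t ^ 2) ∧
  γ ≤ Hub G K ∧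
  Fvar G K ≤ η ^ 2 / 4

lemma Zfun_sq (γ t : ℝ) : Zfun γ t ^ 2 = Real.exp (2 * γ * t) := by
  rw [Zfun, ← Real.exp_nat_mul, Nat.cast_two, mul_assoc]

lemma continuous_Zfun (γ : ℝ) : Continuous (Zfun γ) := by
  unfold Zfun
  fun_prop

lemma eventually_quadG_bounds (hA : 0 < A) (hAB : A < B)
    (hg₀ : ∀ p, (1 / A) * enorm2 p ≤ Zfun γ t₀ ^ 2 * quadG g₀ p ∧
      Zfun γ t₀ ^ 2 * quadG g₀ p ≤ A * enorm2 p) :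
    ∀ᶠ y : ℝ × Mat3 in 𝓝 (t₀, g₀), ∀ p, (1 / B) * enorm2 p ≤ Zfun γ y.1 ^ 2 * quadG y.2 p ∧
      Zfun γ y.1 ^ 2 * quadG y.2 p ≤ B * enorm2 p := by
  have hZ := continuous_Zfun γ
  have hcont : Continuous fun y : ℝ × Mat3 => Zfun γ y.1 ^ 2 • y.2 := by fun_prop
  simp only [← quadG_smul] at hg₀ ⊢
  filter_upwards [hcont.continuousAt.eventually (eventually_mul_enorm2_le_quadG
      (fun p => (hg₀ p).1) (one_div_lt_one_div_of_lt hA hAB)),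
    hcont.continuousAt.eventually (eventually_quadG_le_mul_enorm2 (fun p => (hg₀ p).2) hAB)]
    with y hlower hupper p
  exact ⟨hlower p, hupper p⟩

lemma eventually_abs_apply_le (hAB : A < B) (hk₀ : ∀ a b, |k₀ a b| ≤ A / Zfun γ t₀ ^ 2) :
    ∀ᶠ y : ℝ × Mat3 in 𝓝 (t₀, k₀), ∀ a b, |y.2 a b| ≤ B / Zfun γ y.1 ^ 2 := by
  have hZ := continuous_Zfun γ
  have hZpos : ∀ t, 0 < Zfun γ t ^ 2 := fun t => pow_pos (Real.exp_pos _) 2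
  refine eventually_all.2 fun a => eventually_all.2 fun b => ?_
  have hleft : Continuous fun y : ℝ × Mat3 => |y.2 a b| := by fun_prop
  have hright : Continuous fun y : ℝ × Mat3 => B / Zfun γ y.1 ^ 2 :=
    continuous_const.div (by fun_prop) fun y => (hZpos y.1).ne'
  exact (hleft.continuousAt.eventually_lt hright.continuousAt
    ((hk₀ a b).trans_lt (div_lt_div_of_pos_right hAB (hZpos t₀)))).mono fun _ => le_of_lt

lemma eventually_iterationBounds (hA : 0 < A) (hAB : A < B) (hdet : g₀.det ≠ 0)
    (hg₀ : ∀ p, (1 / A) * enorm2 p ≤ Zfun γ t₀ ^ 2 * quadG g₀ p ∧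
      Zfun γ t₀ ^ 2 * quadG g₀ p ≤ A * enorm2 p)
    (hk₀ : ∀ a b, |k₀ a b| ≤ A / Zfun γ t₀ ^ 2)
    (hγ : γ < Hub g₀ k₀) (hH : Hub g₀ k₀ ≠ 0) (hF : Fvar g₀ k₀ < η ^ 2 / 4) :
    ∀ᶠ y : ℝ × Mat3 × Mat3 in 𝓝 (t₀, g₀, k₀), IterationBounds γ B η y.1 y.2.1 y.2.2 := by
  have hg : ContinuousAt (fun y : ℝ × Mat3 × Mat3 => y.2.1) (t₀, g₀, k₀) := by fun_prop
  have hk : ContinuousAt (fun y : ℝ × Mat3 × Mat3 => y.2.2) (t₀, g₀, k₀) := by fun_prop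
  filter_upwards [(continuousAt_fst.prodMk hg).eventually (eventually_quadG_bounds hA hAB hg₀),
    (continuousAt_fst.prodMk hk).eventually (eventually_abs_apply_le hAB hk₀),
    (continuousAt_Hub hg hk hdet).eventually_const_lt hγ,
    (continuousAt_Fvar hg hk hdet hH).eventually_lt_const hF] with y hquad habs hHub hFvar
  exact ⟨hquad, habs, hHub.le, hFvar.le⟩

lemma exists_lt_sq_div_four {x : ℝ} (hx : x < 1 / 4) : ∃ η, 0 ≤ η ∧ η < 1 ∧ x < η ^ 2 / 4 := by
  have hcont : Continuous fun η : ℝ => η ^ 2 / 4 := by fun_prop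
  have hnear : ∀ᶠ η : ℝ in 𝓝[<] 1, x < η ^ 2 / 4 :=
    ((hcont.tendsto' 1 (1 / 4) (by norm_num)).eventually_const_lt hx).filter_mono
      nhdsWithin_le_nhds
  obtain ⟨η, hxη, hη⟩ := (hnear.and (Ioo_mem_nhdsLT one_pos)).exists
  exact ⟨η, hη.1.le, hη.2, hxη⟩

end Bounds

theorem stmt11_general {Λ γ t₀ T c m A B : ℝ} (hT : t₀ < T) (hm : 5 < m) (hA : 0 < A)
    (hAB : A < B) {f : ℝ → V3 → ℝ}
    (hf : ∀ t ∈ Icc t₀ T, ∀ p : V3, jap p ^ m * |f t p| ≤ c) {g₀ k₀ : Mat3}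
    (hg₀ : ∀ p : V3, (1 / A) * enorm2 p ≤ Real.exp (2 * γ * t₀) * quadG g₀ p ∧
      Real.exp (2 * γ * t₀) * quadG g₀ p ≤ A * enorm2 p)
    (hk₀ : ∀ a b : Fin 3, |k₀ a b| ≤ A * Real.exp (-(2 * γ * t₀)))
    (hγ : γ < Hub g₀ k₀) (hH : Hub g₀ k₀ ≠ 0) (hF : Fvar g₀ k₀ < 1 / 4) :
    ∃ η, 0 ≤ η ∧ η < 1 ∧ ∃ T₂, t₀ < T₂ ∧ T₂ ≤ T ∧
      ∀ gs ks : ℕ → ℝ → Mat3,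
        (∀ t, gs 0 t = g₀ ∧ ks 0 t = k₀) →
        (∀ n, gs (n + 1) t₀ = g₀ ∧ ks (n + 1) t₀ = k₀) →
        (∀ n, ∀ a b : Fin 3, ∀ t ∈ Icc t₀ T,
          HasDerivWithinAt (fun s => gs (n + 1) s a b) (-2 * ks n t a b) (Icc t₀ T) t) →
        (∀ n, ∀ a b : Fin 3, ∀ t ∈ Icc t₀ T,
          HasDerivWithinAt (fun s => ks (n + 1) s a b)
            (kEvol Λ (Zeta γ η t) (gs n t) (ks n t) (f t) a b) (Icc t₀ T) t) →
        ∀ n, ∀ t ∈ Icc t₀ T₂, IterationBounds γ B η t (gs n t) (ks n t) := by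
  have hcoer : ∀ p, 1 / A / Real.exp (2 * γ * t₀) * enorm2 p ≤ quadG g₀ p := fun p => by
    rw [div_mul_eq_mul_div, div_le_iff₀' (Real.exp_pos _)]
    exact (hg₀ p).1
  have hα : 0 < 1 / A / Real.exp (2 * γ * t₀) := by positivity
  obtain ⟨η, hη₀, hη₁, hFη⟩ := exists_lt_sq_div_four hF
  obtain ⟨L, hL⟩ := exists_eventually_norm_einsteinField_le Λ c k₀ hm hα hcoer
  rw [← Zfun_sq] at hg₀
  rw [Real.exp_neg, ← div_eq_mul_inv, ← Zfun_sq] at hk₀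
  have hbounds := eventually_iterationBounds hA hAB (det_ne_zero_of_le_quadG hα hcoer)
    hg₀ hk₀ hγ hH hFη
  obtain ⟨T₂, hT₂, hT₂T, hiter⟩ := exists_forall_isPicardIteration_mem hT
    (hbounds.and (continuousAt_snd.eventually hL)) fun t ht x hx => hx.2 γ η t f (hf t ht)
  exact ⟨η, hη₀, hη₁, T₂, hT₂, hT₂T, fun gs ks hzero hinit hgs hks n t ht =>
    (hiter _ (isPicardIteration_einsteinField hzero hinit hgs hks) n t ht).1⟩

/-- uniform bounds for the iteration for the Einstein equations. Given a
distribution `f` with `‖f(s)‖_{L^∞_m} ≤ c₂` (`m > 5`) and initial data `g₀, k₀` with the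
stated bounds, `H₀ > γ` and `F₀ < 1/4`, for every `C₁ > 1` there exist `η ∈ [0,1)` and
`T₂ ∈ (t₀,T]` such that every iteration sequence `(g_n, k_n)` satisfies the stated bounds
for all `n` and `t ∈ [t₀,T₂]`. -/
theorem stmt11 (Λ γ t₀ T c₂ m A : ℝ)
    (hΛ : 0 < Λ) (hγ : γ = Real.sqrt (Λ / 3)) (hT : t₀ < T)
    (hc₂ : 0 < c₂) (hm : 5 < m) (hA : 0 < A)
    (f : ℝ → V3 → ℝ)
    (hfpos : ∀ t ∈ Icc t₀ T, ∀ p, 0 ≤ f t p)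
    (hfbound : ∀ t ∈ Icc t₀ T, ∀ p : V3, jap p ^ m * |f t p| ≤ c₂)
    (g₀ k₀ : Mat3) (hg₀pd : g₀.PosDef) (hk₀symm : k₀.IsSymm)
    (hg₀b : ∀ p : V3,
      (1 / A) * enorm2 p ≤ Real.exp (2 * γ * t₀) * quadG g₀ p ∧
      Real.exp (2 * γ * t₀) * quadG g₀ p ≤ A * enorm2 p)
    (hk₀b : ∀ a b : Fin 3, |k₀ a b| ≤ A * Real.exp (-(2 * γ * t₀)))
    (hH₀ : γ < Hub g₀ k₀) (hF₀ : Fvar g₀ k₀ < 1 / 4) :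
    ∀ C₁ : ℝ, 1 < C₁ → ∃ η, 0 ≤ η ∧ η < 1 ∧ ∃ T₂, t₀ < T₂ ∧ T₂ ≤ T ∧
      ∀ gs ks : ℕ → ℝ → Mat3,
        (∀ t, gs 0 t = g₀ ∧ ks 0 t = k₀) →
        (∀ n, gs (n + 1) t₀ = g₀ ∧ ks (n + 1) t₀ = k₀) →
        (∀ n, ∀ a b : Fin 3, ∀ t ∈ Icc t₀ T,
          HasDerivWithinAt (fun s => gs (n + 1) s a b) (-2 * ks n t a b) (Icc t₀ T) t) →
        (∀ n, ∀ a b : Fin 3, ∀ t ∈ Icc t₀ T,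
          HasDerivWithinAt (fun s => ks (n + 1) s a b)
            (kEvol Λ (Zeta γ η t) (gs n t) (ks n t) (f t) a b) (Icc t₀ T) t) →
        ∀ n, ∀ t ∈ Icc t₀ T₂,
          (∀ p : V3, (1 / (C₁ * A)) * enorm2 p ≤ Zfun γ t ^ 2 * quadG (gs n t) p ∧
            Zfun γ t ^ 2 * quadG (gs n t) p ≤ C₁ * A * enorm2 p) ∧
          (∀ a b : Fin 3, |ks n t a b| ≤ C₁ * A / Zfun γ t ^ 2) ∧
          γ ≤ Hub (gs n t) (ks n t) ∧
          Fvar (gs n t) (ks n t) ≤ η ^ 2 / 4 :=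
  fun C₁ hC₁ => stmt11_general hT hm hA (lt_mul_of_one_lt_left hA hC₁) hfbound hg₀b hk₀b hH₀
    ((hγ ▸ Real.sqrt_nonneg _ : 0 ≤ γ).trans_lt hH₀).ne' hF₀
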